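/- arXiv:math/0306352 — 4 statements merged into one kernel-verified Lean document; each statement's English description precedes it below -/
import Mathlib

section
/- Let H be an inner product space over 𝕜 (𝕜 = ℝ or ℂ) and let m, M > 0 be real numbers. If x, y ∈ H satisfy Re⟨M·y − x, x − m·y⟩ ≥ 0, then ‖x‖·‖y‖ ≤ (1/2)·(M + m)/√(m·M) · Re⟨x,y⟩ ≤ (1/2)·(M + m)/√(m·M) · |⟨x,y⟩|. -/
open RCLike

section SeminormedSpace

variable {𝕜 H : Type*} [RCLike 𝕜] [SeminormedAddCommGroup H] [InnerProductSpace 𝕜 H]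

theorem re_inner_smul_sub_sub_smul (m M : ℝ) (x y : H) :
    re (inner 𝕜 ((M : 𝕜) • y - x) (x - (m : 𝕜) • y)) =
      (M + m) * re (inner 𝕜 y x) - (‖x‖ ^ 2 + m * M * ‖y‖ ^ 2) := by
  simp only [inner_sub_left, inner_sub_right, inner_smul_left, inner_smul_right, conj_ofReal,
    map_sub, re_ofReal_mul, inner_self_eq_norm_sq, inner_re_symm x y]
  ring

theorem two_mul_sqrt_mul_norm_mul_norm_le {m M : ℝ} (hmM : 0 ≤ m * M) {x y : H}
    (h : 0 ≤ re (inner 𝕜 ((M : 𝕜) • y - x) (x - (m : 𝕜) • y))) :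
    2 * √(m * M) * (‖x‖ * ‖y‖) ≤ (M + m) * re (inner 𝕜 y x) := by
  rw [re_inner_smul_sub_sub_smul, sub_nonneg] at h
  calc
    2 * √(m * M) * (‖x‖ * ‖y‖) = 2 * ‖x‖ * (√(m * M) * ‖y‖) := by ring
    _ ≤ ‖x‖ ^ 2 + (√(m * M) * ‖y‖) ^ 2 := two_mul_le_add_sq _ _
    _ = ‖x‖ ^ 2 + m * M * ‖y‖ ^ 2 := by rw [mul_pow, Real.sq_sqrt hmM]
    _ ≤ (M + m) * re (inner 𝕜 y x) := h

theorem cassels_inner_product_general {m M : ℝ} (hm : 0 < m) (hM : 0 < M) {x y : H}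
    (h : 0 ≤ re (inner 𝕜 ((M : 𝕜) • y - x) (x - (m : 𝕜) • y))) :
    ‖x‖ * ‖y‖ ≤ 1 / 2 * ((M + m) / √(m * M)) * re (inner 𝕜 y x) ∧
      1 / 2 * ((M + m) / √(m * M)) * re (inner 𝕜 y x) ≤
        1 / 2 * ((M + m) / √(m * M)) * ‖inner 𝕜 y x‖ := by
  have hmM : 0 < m * M := mul_pos hm hM
  constructor
  · calc
      ‖x‖ * ‖y‖ ≤ (M + m) * re (inner 𝕜 y x) / (2 * √(m * M)) := by
        rw [le_div_iff₀' (by positivity)]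
        exact two_mul_sqrt_mul_norm_mul_norm_le hmM.le h
      _ = 1 / 2 * ((M + m) / √(m * M)) * re (inner 𝕜 y x) := by ring
  · gcongr
    exact re_le_norm _

end SeminormedSpace

/-- Corollary 2.2.  The inner product is Mathlib's (conjugate-linear in the first
variable), so the paper's `⟨x,y⟩` is written as `inner y x`. -/
theorem cassels_inner_product {𝕜 H : Type*} [RCLike 𝕜] [NormedAddCommGroup H]
    [InnerProductSpace 𝕜 H] (m M : ℝ) (hm : 0 < m) (hM : 0 < M) (x y : H)
    (h : 0 ≤ re (@inner 𝕜 _ _ ((M : 𝕜) • y - x) (x - (m : 𝕜) • y))) :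
    ‖x‖ * ‖y‖ ≤ 1 / 2 * ((M + m) / Real.sqrt (m * M)) * re (@inner 𝕜 _ _ y x) ∧
      1 / 2 * ((M + m) / Real.sqrt (m * M)) * re (@inner 𝕜 _ _ y x) ≤
        1 / 2 * ((M + m) / Real.sqrt (m * M)) * ‖@inner 𝕜 _ _ y x‖ :=
  cassels_inner_product_general hm hM h
end

section
/- (Greub–Reinboldt inequality) Let n ≥ 1, let (a₁,…,aₙ), (b₁,…,bₙ) be real sequences, (w₁,…,wₙ) a sequence of nonnegative reals, and let 0 < a ≤ A and 0 < b ≤ B be real constants such that a ≤ aᵢ ≤ A and b ≤ bᵢ ≤ B for each i. Then (Σᵢ wᵢ·aᵢ²)·(Σᵢ wᵢ·bᵢ²) ≤ (a·b + A·B)²/(4·a·b·A·B) · (Σᵢ wᵢ·aᵢ·bᵢ)². -/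
/-!
The bounds give `a yᵢ ≤ xᵢ B` and `b xᵢ ≤ yᵢ A`, so `(xᵢ B - a yᵢ) (yᵢ A - b xᵢ)` is nonnegative.
Its weighted sum is a linear inequality between the three sums `∑ w x ^ 2`, `∑ w y ^ 2` and
`∑ w x y`; AM-GM turns the sum of the two sums of squares into their product.
-/

section

variable {ι R : Type*} {s : Finset ι} {w x y : ι → R} {a A b B : R}

theorem diaz_metcalf_inequality [CommRing R] [PartialOrder R] [IsOrderedRing R]
    (hw : ∀ i ∈ s, 0 ≤ w i) (hay : ∀ i ∈ s, a * y i ≤ x i * B)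
    (hbx : ∀ i ∈ s, b * x i ≤ y i * A) :
    b * B * ∑ i ∈ s, w i * x i ^ 2 + a * A * ∑ i ∈ s, w i * y i ^ 2 ≤
      (a * b + A * B) * ∑ i ∈ s, w i * x i * y i := by
  rw [Finset.mul_sum, Finset.mul_sum, Finset.mul_sum, ← Finset.sum_add_distrib]
  refine Finset.sum_le_sum fun i hi ↦ sub_nonneg.1 ?_
  calc
    0 ≤ w i * ((x i * B - a * y i) * (y i * A - b * x i)) :=
      mul_nonneg (hw i hi) (mul_nonneg (sub_nonneg.2 (hay i hi)) (sub_nonneg.2 (hbx i hi)))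
    _ = (a * b + A * B) * (w i * x i * y i) -
          (b * B * (w i * x i ^ 2) + a * A * (w i * y i ^ 2)) := by ring

theorem greub_reinboldt_inequality_general [Field R] [LinearOrder R] [IsStrictOrderedRing R]
    (hw : ∀ i ∈ s, 0 ≤ w i) (ha : 0 < a) (hA : 0 < A) (hb : 0 < b) (hB : 0 < B)
    (hay : ∀ i ∈ s, a * y i ≤ x i * B) (hbx : ∀ i ∈ s, b * x i ≤ y i * A) :
    (∑ i ∈ s, w i * x i ^ 2) * (∑ i ∈ s, w i * y i ^ 2) ≤
      (a * b + A * B) ^ 2 / (4 * a * b * A * B) * (∑ i ∈ s, w i * x i * y i) ^ 2 := by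
  have sum_sq_nonneg (z : ι → R) : 0 ≤ ∑ i ∈ s, w i * z i ^ 2 :=
    Finset.sum_nonneg fun i hi ↦ mul_nonneg (hw i hi) (sq_nonneg _)
  have hx := sum_sq_nonneg x
  have hy := sum_sq_nonneg y
  have linear_bound := diaz_metcalf_inequality hw hay hbx
  set X := ∑ i ∈ s, w i * x i ^ 2
  set Y := ∑ i ∈ s, w i * y i ^ 2
  set S := ∑ i ∈ s, w i * x i * y i
  rw [div_mul_eq_mul_div, le_div_iff₀ (by positivity)]
  calc
    X * Y * (4 * a * b * A * B) = 4 * (b * B * X) * (a * A * Y) := by ring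
    _ ≤ (b * B * X + a * A * Y) ^ 2 := four_mul_le_sq_add _ _
    _ ≤ ((a * b + A * B) * S) ^ 2 := pow_le_pow_left₀ (by positivity) linear_bound 2
    _ = (a * b + A * B) ^ 2 * S ^ 2 := mul_pow _ _ 2

end

/-- Inequality (1.3) (Greub–Reinboldt's inequality). -/
theorem greub_reinboldt_inequality (n : ℕ) (hn : 1 ≤ n) (a' b' w : Fin n → ℝ)
    (hw : ∀ i, 0 ≤ w i) (a A b B : ℝ) (ha : 0 < a) (haA : a ≤ A) (hb : 0 < b) (hbB : b ≤ B)
    (h1 : ∀ i, a ≤ a' i ∧ a' i ≤ A) (h2 : ∀ i, b ≤ b' i ∧ b' i ≤ B) :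
    (∑ i, w i * a' i ^ 2) * (∑ i, w i * b' i ^ 2) ≤
      (a * b + A * B) ^ 2 / (4 * a * b * A * B) * (∑ i, w i * a' i * b' i) ^ 2 := by
  have ha' (i) : 0 ≤ a' i := ha.le.trans (h1 i).1
  have hb' (i) : 0 ≤ b' i := hb.le.trans (h2 i).1
  exact greub_reinboldt_inequality_general (fun i _ ↦ hw i) ha (ha.trans_le haA) hb
    (hb.trans_le hbB) (fun i _ ↦ mul_le_mul (h1 i).1 (h2 i).2 (hb' i) (ha' i))
    (fun i _ ↦ mul_le_mul (h2 i).1 (h1 i).2 (ha' i) (hb' i))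
end

section
/- Let T be a set and A : (T → ℝ) → ℝ a functional that is linear (A(α·f + β·g) = α·A(f) + β·A(g) for all α, β ∈ ℝ and f, g) and isotonic (f(t) ≥ g(t) for all t ∈ T implies A(f) ≥ A(g)). Let f, g, h : T → ℝ with h ≥ 0 and A(h) > 0, and suppose m, M > 0 satisfy m·g(t) ≤ f(t) ≤ M·g(t) for all t ∈ T. Then 0 ≤ A(f²·h)·A(g²·h) − A(f·g·h)² ≤ (M − m)²/(4·m·M) · A(f·g·h)². -/
/-!
For a positive linear functional `A` and a weight `h ≥ 0`, the form `⟪f, g⟫ = A (f * g * h)` is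
symmetric and positive semidefinite, so the lower bound is the Cauchy–Schwarz inequality. For the
upper bound, `(f - m g) (M g - f) h ≥ 0` gives the Diaz–Metcalf inequality
`⟪f, f⟫ + m M ⟪g, g⟫ ≤ (m + M) ⟪f, g⟫`. Its left side is nonnegative, so squaring and using
`4 a b ≤ (a + b) ^ 2` yields `4 m M ⟪f, f⟫ ⟪g, g⟫ ≤ (m + M) ^ 2 ⟪f, g⟫ ^ 2`, and
`(m + M) ^ 2 = 4 m M + (M - m) ^ 2`.
-/

theorem mul_sub_sq_le_of_add_mul_le {K : Type*} [Field K] [LinearOrder K]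
    [IsStrictOrderedRing K] {a b c m M : K} (hmM : 0 < m * M) (hnonneg : 0 ≤ a + m * M * b)
    (hle : a + m * M * b ≤ (m + M) * c) :
    a * b - c ^ 2 ≤ (M - m) ^ 2 / (4 * m * M) * c ^ 2 := by
  have four_mul_le : 4 * (m * M) * (a * b) ≤ (m + M) ^ 2 * c ^ 2 :=
    calc 4 * (m * M) * (a * b) = 4 * a * (m * M * b) := by ring
      _ ≤ (a + m * M * b) ^ 2 := four_mul_le_sq_add a (m * M * b)
      _ ≤ ((m + M) * c) ^ 2 := by gcongr
      _ = (m + M) ^ 2 * c ^ 2 := mul_pow _ _ _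
  rw [mul_assoc 4 m M, div_mul_eq_mul_div, le_div_iff₀ (by positivity)]
  linear_combination four_mul_le

theorem bilinForm_diaz_metcalf {R V : Type*} [CommRing R] [PartialOrder R] [IsOrderedAddMonoid R]
    [AddCommGroup V] [Module R V] {B : LinearMap.BilinForm R V} (hB : B.IsSymm) {x y : V} {m M : R}
    (hxy : 0 ≤ B (x - m • y) (M • y - x)) :
    B x x + m * M * B y y ≤ (m + M) * B x y := by
  have expand : B (x - m • y) (M • y - x) = (m + M) * B x y - (B x x + m * M * B y y) := by
    simp only [map_sub, map_smul, LinearMap.sub_apply, LinearMap.smul_apply, smul_eq_mul,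
      hB.eq y x]
    ring
  rwa [expand, sub_nonneg] at hxy

theorem bilinForm_cassels {K V : Type*} [Field K] [LinearOrder K] [IsStrictOrderedRing K]
    [AddCommGroup V] [Module K V] {B : LinearMap.BilinForm K V} (hB : B.IsPosSemidef)
    {x y : V} {m M : K} (hmM : 0 < m * M) (hxy : 0 ≤ B (x - m • y) (M • y - x)) :
    B x x * B y y - B x y ^ 2 ≤ (M - m) ^ 2 / (4 * m * M) * B x y ^ 2 :=
  mul_sub_sq_le_of_add_mul_le hmM
    (add_nonneg (hB.nonneg x) (mul_nonneg hmM.le (hB.nonneg y)))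
    (bilinForm_diaz_metcalf hB.isSymm hxy)

/-- The bilinear form `(f, g) ↦ A (f * g * h)` of a linear functional `A` with weight `h`, the
analogue of the inner product of a weighted `L²` space. -/
def weightedForm {R E : Type*} [CommSemiring R] [Semiring E] [Algebra R E] (A : E →ₗ[R] R)
    (h : E) : LinearMap.BilinForm R E :=
  (LinearMap.mul R E).compr₂ (A ∘ₗ LinearMap.mulRight R h)

theorem weightedForm_apply {R E : Type*} [CommSemiring R] [Semiring E] [Algebra R E]
    (A : E →ₗ[R] R) (h f g : E) : weightedForm A h f g = A (f * g * h) :=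
  rfl

theorem weightedForm_isPosSemidef {R E : Type*} [CommSemiring R] [PartialOrder R]
    [CommSemiring E] [PartialOrder E] [PosMulMono E] [Algebra R E] (hsq : ∀ x : E, 0 ≤ x ^ 2)
    (A : E →ₚ[R] R) {h : E} (hh : 0 ≤ h) :
    (weightedForm A.toLinearMap h).IsPosSemidef where
  eq f g := by simp only [weightedForm_apply, mul_comm f g]
  nonneg f := by
    rw [weightedForm_apply, ← sq]
    exact A.map_nonneg (mul_nonneg (hsq f) hh)

/-- A monotone functional that preserves binary linear combinations, as a positive linear map: it
bundles the isotonic linear functionals of the literature. -/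
def positiveLinearMapOfMonotone {R E F : Type*} [Semiring R] [AddCommMonoid E] [PartialOrder E]
    [Module R E] [AddCommMonoid F] [PartialOrder F] [Module R F] (A : E → F)
    (hlin : ∀ (a b : R) (x y : E), A (a • x + b • y) = a • A x + b • A y) (hA : Monotone A) :
    E →ₚ[R] F where
  toFun := A
  map_add' x y := by simpa only [one_smul] using hlin 1 1 x y
  map_smul' a x := by simpa only [zero_smul, add_zero, RingHom.id_apply] using hlin a 0 x x
  monotone' := hA

theorem isotonic_functional_cassels_additive_squares_general {K E : Type*} [Field K]
    [LinearOrder K] [IsStrictOrderedRing K] [CommRing E] [PartialOrder E] [IsOrderedRing E]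
    [Algebra K E] (hsq : ∀ x : E, 0 ≤ x ^ 2) (A : E →ₚ[K] K) {f g h : E} (hh : 0 ≤ h) {m M : K}
    (hmM : 0 < m * M) (hmf : m • g ≤ f) (hfM : f ≤ M • g) :
    0 ≤ A (f ^ 2 * h) * A (g ^ 2 * h) - A (f * g * h) ^ 2 ∧
      A (f ^ 2 * h) * A (g ^ 2 * h) - A (f * g * h) ^ 2 ≤
        (M - m) ^ 2 / (4 * m * M) * A (f * g * h) ^ 2 := by
  let B := weightedForm A.toLinearMap h
  have hB : B.IsPosSemidef := weightedForm_isPosSemidef hsq A hh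
  have cauchy_schwarz : B f g ^ 2 ≤ B f f * B g g :=
    B.apply_sq_le_of_symm hB.nonneg ⟨hB.eq⟩ f g
  have hfg : 0 ≤ B (f - m • g) (M • g - f) :=
    A.map_nonneg (mul_nonneg (mul_nonneg (sub_nonneg.2 hmf) (sub_nonneg.2 hfM)) hh)
  rw [sq f, sq g]
  exact ⟨sub_nonneg.2 cauchy_schwarz, bilinForm_cassels hB hmM hfg⟩

/-- Corollary 3.2, inequality (3.5). -/
theorem isotonic_functional_cassels_additive_squares {T : Type*} (A : (T → ℝ) → ℝ)
    (hlin : ∀ (α β : ℝ) (f g : T → ℝ), A (fun t => α * f t + β * g t) = α * A f + β * A g)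
    (hiso : ∀ f g : T → ℝ, (∀ t, g t ≤ f t) → A g ≤ A f)
    (f g h : T → ℝ) (hh : ∀ t, 0 ≤ h t) (hAh : 0 < A h)
    (m M : ℝ) (hm : 0 < m) (hM : 0 < M)
    (hfg : ∀ t, m * g t ≤ f t ∧ f t ≤ M * g t) :
    0 ≤ A (fun t => f t ^ 2 * h t) * A (fun t => g t ^ 2 * h t) -
        A (fun t => f t * g t * h t) ^ 2 ∧
      A (fun t => f t ^ 2 * h t) * A (fun t => g t ^ 2 * h t) -
          A (fun t => f t * g t * h t) ^ 2 ≤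
        (M - m) ^ 2 / (4 * m * M) * A (fun t => f t * g t * h t) ^ 2 :=
  isotonic_functional_cassels_additive_squares_general (fun x t => sq_nonneg (x t))
    (positiveLinearMapOfMonotone A hlin fun f g hle => hiso g f hle) hh (mul_pos hm hM)
    (fun t => (hfg t).1) (fun t => (hfg t).2)
end

section
/- Let (Ω, Σ, μ) be a measure space, ρ : Ω → [0, ∞) measurable, and 𝕜 = ℝ or ℂ. Let m, M > 0 be real numbers, and let f, g : Ω → 𝕜 be measurable with ∫ ρ(s)·|f(s)|² dμ(s) < ∞ and ∫ ρ(s)·|g(s)|² dμ(s) < ∞. If ∫ ρ(s)·Re[(M·g(s) − f(s))·(conj(f(s)) − m·conj(g(s)))] dμ(s) ≥ 0, then (∫ ρ·|f|² dμ · ∫ ρ·|g|² dμ)^(1/2) ≤ (1/2)·(M + m)/√(m·M) · ∫ ρ(s)·Re[f(s)·conj(g(s))] dμ(s). -/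
open RCLike ComplexConjugate MeasureTheory

/-!
Expanding `re ⟪f - γ g, Γ g - f⟫` and integrating against `ρ`, the hypothesis says that
`∫ ρ ‖f‖ ^ 2 + re (conj γ * Γ) * ∫ ρ ‖g‖ ^ 2` is at most the integral of the cross term
`ρ re ⟪(Γ + γ) g, f⟫`. By the arithmetic-geometric mean inequality, this sum is at least
`2 √(re (conj γ * Γ)) √(∫ ρ ‖f‖ ^ 2 * ∫ ρ ‖g‖ ^ 2)`.
The case of the scalar field with its inner product `⟪x, y⟫ = y * conj x` and real `γ = m`,
`Γ = M` is Cassels' inequality.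
-/

lemma sqrt_mul_le_half_add {a b : ℝ} (h : 0 ≤ a + b) : √(a * b) ≤ (a + b) / 2 :=
  Real.sqrt_le_iff.2 ⟨by positivity, by linarith [four_mul_le_sq_add a b]⟩

lemma re_inner_sub_smul_smul_sub {𝕜 E : Type*} [RCLike 𝕜] [SeminormedAddCommGroup E]
    [InnerProductSpace 𝕜 E] (γ Γ : 𝕜) (x y : E) :
    re (inner 𝕜 (x - γ • y) (Γ • y - x)) =
      re (inner 𝕜 ((Γ + γ) • y) x) - ‖x‖ ^ 2 - re (conj γ * Γ) * ‖y‖ ^ 2 := by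
  have inner_x_smul_y : re (inner 𝕜 x (Γ • y)) = re (inner 𝕜 (Γ • y) x) := inner_re_symm _ _
  have inner_smul_y_smul_y : re (inner 𝕜 (γ • y) (Γ • y)) = re (conj γ * Γ) * ‖y‖ ^ 2 := by
    rw [inner_smul_left, inner_smul_right, inner_self_eq_norm_sq_to_K, ← mul_assoc,
      ← ofReal_pow, re_mul_ofReal]
  simp only [inner_sub_left, inner_sub_right, add_smul, inner_add_left, map_sub, map_add,
    inner_x_smul_y, inner_smul_y_smul_y, inner_self_eq_norm_sq]
  ring

section WeightedIntegral

variable {𝕜 E Ω : Type*} [RCLike 𝕜] [NormedAddCommGroup E] [InnerProductSpace 𝕜 E]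
  [MeasurableSpace Ω] {μ : Measure Ω} {ρ : Ω → ℝ} {f g : Ω → E}

lemma integrable_mul_re_inner (hρm : AEStronglyMeasurable ρ μ)
    (hfm : AEStronglyMeasurable f μ) (hgm : AEStronglyMeasurable g μ)
    (hf2 : Integrable (fun s => ρ s * ‖f s‖ ^ 2) μ)
    (hg2 : Integrable (fun s => ρ s * ‖g s‖ ^ 2) μ) :
    Integrable (fun s => ρ s * re (inner 𝕜 (f s) (g s))) μ := by
  refine (hf2.norm.add hg2.norm).mono' (hρm.mul (hfm.inner (𝕜 := 𝕜) hgm).re)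
    (.of_forall fun s => ?_)
  have cauchy_schwarz : |re (inner 𝕜 (f s) (g s))| ≤ ‖f s‖ * ‖g s‖ :=
    (abs_re_le_norm _).trans (norm_inner_le_norm _ _)
  calc ‖ρ s * re (inner 𝕜 (f s) (g s))‖
      = |ρ s| * |re (inner 𝕜 (f s) (g s))| := abs_mul _ _
    _ ≤ |ρ s| * (‖f s‖ ^ 2 + ‖g s‖ ^ 2) := by
      gcongr
      linarith [two_mul_le_add_sq ‖f s‖ ‖g s‖, sq_nonneg ‖f s‖, sq_nonneg ‖g s‖]
    _ = ‖ρ s * ‖f s‖ ^ 2‖ + ‖ρ s * ‖g s‖ ^ 2‖ := by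
      simp only [mul_add, norm_mul, norm_pow, norm_norm, ← Real.norm_eq_abs]

lemma integral_mul_re_inner_sub_smul_smul_sub (γ Γ : 𝕜) (hρm : AEStronglyMeasurable ρ μ)
    (hfm : AEStronglyMeasurable f μ) (hgm : AEStronglyMeasurable g μ)
    (hf2 : Integrable (fun s => ρ s * ‖f s‖ ^ 2) μ)
    (hg2 : Integrable (fun s => ρ s * ‖g s‖ ^ 2) μ) :
    ∫ s, ρ s * re (inner 𝕜 (f s - γ • g s) (Γ • g s - f s)) ∂μ =
      ∫ s, ρ s * re (inner 𝕜 ((Γ + γ) • g s) (f s)) ∂μ - ∫ s, ρ s * ‖f s‖ ^ 2 ∂μ -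
        re (conj γ * Γ) * ∫ s, ρ s * ‖g s‖ ^ 2 ∂μ := by
  have cross : Integrable (fun s => ρ s * re (inner 𝕜 ((Γ + γ) • g s) (f s))) μ := by
    refine integrable_mul_re_inner hρm (hgm.const_smul _) hfm ?_ hf2
    simpa only [norm_smul, mul_pow, mul_left_comm] using hg2.const_mul (‖Γ + γ‖ ^ 2)
  have cross_sub : Integrable
      (fun s => ρ s * re (inner 𝕜 ((Γ + γ) • g s) (f s)) - ρ s * ‖f s‖ ^ 2) μ := cross.sub hf2
  simp only [re_inner_sub_smul_smul_sub, mul_sub, mul_left_comm (ρ _) (re (conj γ * Γ))]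
  rw [integral_sub cross_sub (hg2.const_mul _), integral_sub cross hf2, integral_const_mul]

theorem weighted_integral_cassels_general (γ Γ : 𝕜) (hγΓ : 0 < re (conj γ * Γ))
    (hρm : AEStronglyMeasurable ρ μ) (hρ : 0 ≤ᵐ[μ] ρ)
    (hfm : AEStronglyMeasurable f μ) (hgm : AEStronglyMeasurable g μ)
    (hf2 : Integrable (fun s => ρ s * ‖f s‖ ^ 2) μ)
    (hg2 : Integrable (fun s => ρ s * ‖g s‖ ^ 2) μ)
    (h : 0 ≤ ∫ s, ρ s * re (inner 𝕜 (f s - γ • g s) (Γ • g s - f s)) ∂μ) :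
    √((∫ s, ρ s * ‖f s‖ ^ 2 ∂μ) * ∫ s, ρ s * ‖g s‖ ^ 2 ∂μ) ≤
      1 / 2 * ((∫ s, ρ s * re (inner 𝕜 ((Γ + γ) • g s) (f s)) ∂μ) / √(re (conj γ * Γ))) := by
  rw [integral_mul_re_inner_sub_smul_smul_sub γ Γ hρm hfm hgm hf2 hg2] at h
  have weighted_sq_nonneg (u : Ω → E) : 0 ≤ ∫ s, ρ s * ‖u s‖ ^ 2 ∂μ :=
    integral_nonneg_of_ae <| hρ.mono fun s hs => mul_nonneg hs (sq_nonneg _)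
  set A := ∫ s, ρ s * ‖f s‖ ^ 2 ∂μ
  set B := ∫ s, ρ s * ‖g s‖ ^ 2 ∂μ
  set C := ∫ s, ρ s * re (inner 𝕜 ((Γ + γ) • g s) (f s)) ∂μ
  set κ := re (conj γ * Γ)
  have hA : 0 ≤ A := weighted_sq_nonneg f
  have hB : 0 ≤ B := weighted_sq_nonneg g
  rw [← mul_div_assoc, le_div_iff₀ (Real.sqrt_pos.2 hγΓ)]
  calc √(A * B) * √κ = √(A * (κ * B)) := by
        rw [← Real.sqrt_mul (mul_nonneg hA hB), mul_assoc, mul_comm B]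
    _ ≤ (A + κ * B) / 2 := sqrt_mul_le_half_add (by positivity)
    _ ≤ 1 / 2 * C := by linarith

end WeightedIntegral

/-- Proposition 4.5. -/
theorem weighted_integral_cassels {𝕜 Ω : Type*} [RCLike 𝕜] [MeasurableSpace Ω]
    (μ : Measure Ω) (ρ : Ω → ℝ) (hρm : Measurable ρ) (hρ : ∀ s, 0 ≤ ρ s)
    (m M : ℝ) (hm : 0 < m) (hM : 0 < M)
    (f g : Ω → 𝕜) (hfm : Measurable f) (hgm : Measurable g)
    (hf2 : Integrable (fun s => ρ s * ‖f s‖ ^ 2) μ)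
    (hg2 : Integrable (fun s => ρ s * ‖g s‖ ^ 2) μ)
    (h : 0 ≤ ∫ s, ρ s * re (((M : 𝕜) * g s - f s) * (conj (f s) - (m : 𝕜) * conj (g s))) ∂μ) :
    Real.sqrt ((∫ s, ρ s * ‖f s‖ ^ 2 ∂μ) * (∫ s, ρ s * ‖g s‖ ^ 2 ∂μ)) ≤
      1 / 2 * ((M + m) / Real.sqrt (m * M)) * ∫ s, ρ s * re (f s * conj (g s)) ∂μ := by
  simpa only [← RCLike.inner_apply, inner_smul_left, ← ofReal_add, ← ofReal_mul, conj_ofReal,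
    re_ofReal_mul, ofReal_re, mul_left_comm (ρ _) (M + m), integral_const_mul,
    mul_div_right_comm, mul_assoc] using
    weighted_integral_cassels_general (m : 𝕜) (M : 𝕜) (by simpa using mul_pos hm hM)
      hρm.aestronglyMeasurable (.of_forall hρ) hfm.aestronglyMeasurable hgm.aestronglyMeasurable
      hf2 hg2 (by simpa using h)
end
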